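/- arXiv:1905.01891 — 2 statements merged into one kernel-verified Lean document; each statement's English description precedes it below -/
import Mathlib

section
/- Let (a_j)_{j≥0} be a real sequence with a_j ~ j^{-β}, 1/2<β<1, and set d_{n,j} = ∑_{k=1}^n a_{k-j} for j≤0 and d_{n,j} = ∑_{k=j}^n a_{k-j} for 1≤j≤n. Then ∑_{j=-∞}^n d_{n,j}^2 ~ C n^{3-2β} as n→∞, where C = ∫_0^∞ (∫_0^1 (u+z)^{-β} du)^2 dz + ∫_0^1 (∫_0^{1-z} u^{-β} du)^2 dz. -/
open MeasureTheory Filter intervalIntegral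

/-- Extension of a one-sided filter `(a_j)_{j ≥ 0}` to `ℤ` by zero. -/
noncomputable def filterZ (a : ℕ → ℝ) (i : ℤ) : ℝ := if 0 ≤ i then a i.toNat else 0

/-- The coefficients `d_{n,j} = ∑_{k=1}^n a_{k-j}` (with `a_i = 0` for `i < 0`),
which for `1 ≤ j ≤ n` agrees with `∑_{k=j}^n a_{k-j}`. -/
noncomputable def dCoef (a : ℕ → ℝ) (n : ℕ) (j : ℤ) : ℝ :=
  ∑ k ∈ Finset.Icc 1 n, filterZ a ((k : ℤ) - j)

noncomputable def psum (a : ℕ → ℝ) (m : ℕ) : ℝ := ∑ i ∈ Finset.range m, a i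

lemma dCoef_eq (a : ℕ → ℝ) (n : ℕ) (j : ℤ) :
    dCoef a n j = psum a (((n : ℤ) + 1 - j).toNat) - psum a ((1 - j).toNat) := by
  induction n with
  | zero => simp [dCoef]
  | succ n ih =>
    have h : dCoef a (n+1) j = dCoef a n j + filterZ a (((n:ℤ) + 1) - j) := by
      unfold dCoef
      rw [Finset.sum_Icc_succ_top (by omega)]
      push_cast; rfl
    rw [h, ih]
    unfold filterZ
    split_ifs with h0
    · have : (((n+1 : ℕ) : ℤ) + 1 - j).toNat = ((n:ℤ) + 1 - j).toNat + 1 := by omega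
      rw [this]
      unfold psum
      rw [Finset.sum_range_succ]; ring
    · have h1 : (((n+1 : ℕ) : ℤ) + 1 - j).toNat = 0 := by omega
      have h2 : ((n:ℤ) + 1 - j).toNat = 0 := by omega
      rw [h1, h2]; ring

lemma diff_asymp (s : ℝ) :
    Tendsto (fun i : ℕ => (((i:ℝ)+1)^s - (i:ℝ)^s) * (i:ℝ)^(1-s)) atTop (nhds s) := by
  have hd : HasDerivAt (fun x : ℝ => x ^ s) s 1 := by
    simpa using Real.hasDerivAt_rpow_const (x := 1) (p := s) (Or.inl one_ne_zero)
  have h2 := hd.tendsto_slope_zero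
  have h3 : Tendsto (fun i : ℕ => ((i:ℝ))⁻¹) atTop (nhdsWithin 0 {0}ᶜ) := by
    rw [tendsto_nhdsWithin_iff]
    refine ⟨tendsto_inv_atTop_nhds_zero_nat, ?_⟩
    filter_upwards [eventually_gt_atTop 0] with i hi
    have : (i:ℝ) ≠ 0 := by positivity
    simpa using hi.ne'
  refine (h2.comp h3).congr' ?_
  filter_upwards [eventually_gt_atTop 0] with i hi
  have hi' : (0:ℝ) < i := by positivity
  simp only [Function.comp, inv_inv, smul_eq_mul, Real.one_rpow]
  have e1 : (i:ℝ)+1 = i * (1 + (i:ℝ)⁻¹) := by field_simp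
  have e2 : (i:ℝ)^(1-s) * (i:ℝ)^s = i := by rw [← Real.rpow_add hi']; simp
  rw [e1, Real.mul_rpow hi'.le (by positivity)]
  linear_combination (1 - (1 + (i:ℝ)⁻¹)^s) * e2

lemma psum_asymp (β : ℝ) (hβ2 : β < 1) (a : ℕ → ℝ)
    (ha : Tendsto (fun j : ℕ => a j * (j : ℝ) ^ β) atTop (nhds 1)) :
    Tendsto (fun m : ℕ => psum a m / (m:ℝ)^(1-β)) atTop (nhds (1/(1-β))) := by
  have hb : 0 < 1 - β := by linarith
  have hg := diff_asymp (1-β)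
  rw [show 1 - (1 - β) = β by ring] at hg
  set g : ℕ → ℝ := fun i => ((i:ℝ)+1)^(1-β) - (i:ℝ)^(1-β) with hgdef
  have hgsum : ∀ m : ℕ, ∑ i ∈ Finset.range m, g i = (m:ℝ)^(1-β) := by
    intro m
    have := Finset.sum_range_sub (fun i : ℕ => (i:ℝ)^(1-β)) m
    simp only [Nat.cast_add, Nat.cast_one, Nat.cast_zero, Real.zero_rpow hb.ne', sub_zero] at this
    exact this
  have hgpos : ∀ i, 0 < g i := by
    intro i
    have : (i:ℝ)^(1-β) < ((i:ℝ)+1)^(1-β) := Real.rpow_lt_rpow (by positivity) (by linarith) hb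
    simp only [hgdef]; linarith
  have hinf : Tendsto (fun m : ℕ => (m:ℝ)^(1-β)) atTop atTop :=
    (tendsto_rpow_atTop hb).comp tendsto_natCast_atTop_atTop
  have ho : (fun i => a i - g i / (1-β)) =o[atTop] g := by
    rw [Asymptotics.isLittleO_iff_tendsto (fun x hx => absurd hx (hgpos x).ne')]
    have h1 : Tendsto (fun i : ℕ => (a i * (i:ℝ)^β) / (g i * (i:ℝ)^β) - 1/(1-β)) atTop
        (nhds (1/(1-β) - 1/(1-β))) := (ha.div hg hb.ne').sub_const _
    rw [sub_self] at h1
    refine h1.congr' ?_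
    filter_upwards [eventually_gt_atTop 0] with i hi
    have hi' : (0:ℝ) < (i:ℝ)^β := by positivity
    have := (hgpos i).ne'
    field_simp
  have hs := ho.sum_range (fun i => (hgpos i).le) (by simpa only [hgsum] using hinf)
  simp only [hgsum, Finset.sum_sub_distrib, ← Finset.sum_div] at hs
  have h2 := hs.tendsto_div_nhds_zero.add_const (1/(1-β))
  rw [zero_add] at h2
  refine h2.congr' ?_
  filter_upwards [eventually_gt_atTop 0] with i hi
  have hi' : (0:ℝ) < (i:ℝ)^(1-β) := by positivity
  unfold psum
  field_simp
  ring

noncomputable def Tn (β : ℝ) (a : ℕ → ℝ) (n : ℕ) (x : ℝ) : ℝ :=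
  (n:ℝ)^(β-1) * psum a ⌊n * x + 1⌋₊

noncomputable def Gf (β x : ℝ) : ℝ := (max x 0)^(1-β)/(1-β)

lemma Tn_tendsto (β : ℝ) (hβ2 : β < 1) (a : ℕ → ℝ)
    (ha : Tendsto (fun j : ℕ => a j * (j : ℝ) ^ β) atTop (nhds 1)) (x : ℝ) (hx : x ≠ 0) :
    Tendsto (fun n : ℕ => Tn β a n x) atTop (nhds (Gf β x)) := by
  have hb : 0 < 1 - β := by linarith
  rcases lt_or_gt_of_ne hx with h | h
  · have : Gf β x = 0 := by simp [Gf, max_eq_right h.le, Real.zero_rpow hb.ne']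
    rw [this]
    refine tendsto_const_nhds.congr' ?_
    filter_upwards [eventually_gt_atTop 0] with n hn
    have hn' : (0:ℝ) < n := by positivity
    have : ⌊(n:ℝ) * x + 1⌋₊ = 0 := Nat.floor_eq_zero.2 (by nlinarith)
    simp [Tn, this, psum]
  · have hm : Tendsto (fun n : ℕ => ⌊(n:ℝ) * x + 1⌋₊) atTop atTop := by
      refine tendsto_nat_floor_atTop.comp ?_
      exact tendsto_atTop_add_const_right _ _ (tendsto_natCast_atTop_atTop.atTop_mul_const h)
    have h1 := (psum_asymp β hβ2 a ha).comp hm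
    have h2 : Tendsto (fun n : ℕ => (⌊(n:ℝ) * x + 1⌋₊ : ℝ) / n) atTop (nhds x) := by
      have h3 := ((tendsto_nat_floor_mul_div_atTop (R := ℝ) h.le).comp
        tendsto_natCast_atTop_atTop).add tendsto_inv_atTop_nhds_zero_nat
      rw [add_zero] at h3
      refine h3.congr ?_
      intro n
      simp only [Function.comp]
      rw [Nat.floor_add_one (by positivity), mul_comm x]
      push_cast
      ring
    have h4 := h2.rpow_const (p := 1-β) (Or.inl hx)
    have h5 := h1.mul h4
    have : Gf β x = 1/(1-β) * x^(1-β) := by rw [Gf, max_eq_left h.le]; ring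
    rw [this]
    refine h5.congr' ?_
    filter_upwards [eventually_gt_atTop 0] with n hn
    have hn' : (0:ℝ) < n := by positivity
    have hmp : (0:ℝ) < ⌊(n:ℝ) * x + 1⌋₊ := by
      rw [Nat.floor_add_one (by positivity)]; positivity
    simp only [Function.comp, Tn]
    rw [Real.div_rpow hmp.le hn'.le, show β - 1 = -(1-β) by ring, Real.rpow_neg hn'.le]
    field_simp

noncomputable def Fn (β : ℝ) (a : ℕ → ℝ) (n : ℕ) (z : ℝ) : ℝ :=
  (n:ℝ)^(β-1) * dCoef a n (-⌊n * z⌋)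

lemma Fn_eq (β : ℝ) (a : ℕ → ℝ) (n : ℕ) (z : ℝ) :
    Fn β a n z = Tn β a n (1+z) - Tn β a n z := by
  unfold Fn Tn
  rw [dCoef_eq, ← mul_sub, ← Int.floor_toNat, ← Int.floor_toNat]
  congr 4
  · rw [show (n:ℝ) * (1+z) + 1 = n * z + ((n + 1 : ℕ) : ℝ) by push_cast; ring,
      Int.floor_add_natCast]
    push_cast; ring
  · rw [Int.floor_add_one]; ring

lemma Fn_bound (β : ℝ) (hβ1 : 1 / 2 < β) (hβ2 : β < 1) (a : ℕ → ℝ)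
    (ha : Tendsto (fun j : ℕ => a j * (j : ℝ) ^ β) atTop (nhds 1)) :
    ∃ K : ℝ, 0 ≤ K ∧ ∀ n : ℕ, 0 < n → ∀ z : ℝ, |Fn β a n z| ≤
      if z < -1 then 0 else if z ≤ 1 then K else K * z^(-β) := by
  have hb : 0 < 1 - β := by linarith
  obtain ⟨K1, hK1⟩ := ha.abs.bddAbove_range
  obtain ⟨K2, hK2⟩ := (psum_asymp β hβ2 a ha).abs.bddAbove_range
  have hK1' : ∀ i : ℕ, |a i * (i:ℝ)^β| ≤ K1 := fun i => hK1 ⟨i, rfl⟩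
  have hK2' : ∀ i : ℕ, |psum a i / (i:ℝ)^(1-β)| ≤ K2 := fun i => hK2 ⟨i, rfl⟩
  have hK10 : 0 ≤ K1 := (abs_nonneg _).trans (hK1' 0)
  have hK20 : 0 ≤ K2 := (abs_nonneg _).trans (hK2' 0)
  have hp : ∀ m : ℕ, |psum a m| ≤ K2 * (m:ℝ)^(1-β) := by
    intro m
    rcases Nat.eq_zero_or_pos m with rfl | hm
    · simp [psum, Real.zero_rpow hb.ne']
    · have h0 : (0:ℝ) < (m:ℝ)^(1-β) := by positivity
      have := hK2' m
      rw [abs_div, abs_of_pos h0, div_le_iff₀ h0] at this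
      exact this
  have hT : ∀ n : ℕ, 0 < n → ∀ x : ℝ, x ≤ 2 → |Tn β a n x| ≤ 3 * K2 := by
    intro n hn x hx
    have hn' : (0:ℝ) < n := by positivity
    have hn1 : (1:ℝ) ≤ n := by exact_mod_cast hn
    have hm : (⌊(n:ℝ) * x + 1⌋₊ : ℝ) ≤ 3 * n := by
      have : ⌊(n:ℝ) * x + 1⌋₊ ≤ ⌊((3 * n : ℕ) : ℝ)⌋₊ := Nat.floor_le_floor (by push_cast; nlinarith)
      rw [Nat.floor_natCast] at this
      exact_mod_cast this
    unfold Tn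
    have hnp : (0:ℝ) < (n:ℝ)^(β-1) := by positivity
    rw [abs_mul, abs_of_pos hnp]
    calc _ ≤ (n:ℝ)^(β-1) * (K2 * (3 * n : ℝ)^(1-β)) := by
          refine mul_le_mul_of_nonneg_left ((hp _).trans ?_) hnp.le
          refine mul_le_mul_of_nonneg_left ?_ hK20
          exact Real.rpow_le_rpow (by positivity) hm hb.le
      _ = K2 * (3:ℝ)^(1-β) := by
          rw [Real.mul_rpow (by norm_num) hn'.le]
          have : (n:ℝ)^(β-1) * (n:ℝ)^(1-β) = 1 := by rw [← Real.rpow_add hn']; simp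
          linear_combination K2 * 3^(1-β) * this
      _ ≤ K2 * (3:ℝ)^(1:ℝ) := by
          refine mul_le_mul_of_nonneg_left ?_ hK20
          exact Real.rpow_le_rpow_of_exponent_le (by norm_num) (by linarith)
      _ = 3 * K2 := by rw [Real.rpow_one]; ring
  refine ⟨6 * K2 + K1, by positivity, ?_⟩
  intro n hn z
  have hn' : (0:ℝ) < n := by positivity
  split_ifs with h1 h2
  · rw [Fn_eq]
    have e1 : ⌊(n:ℝ) * (1+z) + 1⌋₊ = 0 := Nat.floor_eq_zero.2 (by nlinarith)
    have e2 : ⌊(n:ℝ) * z + 1⌋₊ = 0 := Nat.floor_eq_zero.2 (by nlinarith)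
    simp [Tn, e1, e2]
  · rw [Fn_eq]
    have e1 := hT n hn (1+z) (by linarith)
    have e2 := hT n hn z (by linarith)
    have := abs_sub (Tn β a n (1+z)) (Tn β a n z)
    linarith
  · push Not at h1 h2
    have hz : 0 < z := by linarith
    have hnz : 0 < n * z := by positivity
    unfold Fn
    have hnp : (0:ℝ) < (n:ℝ)^(β-1) := by positivity
    rw [abs_mul, abs_of_pos hnp]
    have hd : |dCoef a n (-⌊n * z⌋)| ≤ n * (K1 * (n * z)^(-β)) := by
      unfold dCoef
      refine (Finset.abs_sum_le_sum_abs _ _).trans ?_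
      have : ∀ k ∈ Finset.Icc 1 n, |filterZ a ((k:ℤ) - -⌊n * z⌋)| ≤ K1 * (n * z)^(-β) := by
        intro k hk
        have hk1 := (Finset.mem_Icc.1 hk).1
        have hf : 0 ≤ ⌊(n:ℝ) * z⌋ := Int.floor_nonneg.2 hnz.le
        unfold filterZ
        rw [if_pos (by omega)]
        set i := ((k:ℤ) - -⌊n * z⌋).toNat with hi
        have hi' : (i:ℝ) = k + ⌊(n:ℝ) * z⌋ := by
          have : (i:ℤ) = k + ⌊(n:ℝ) * z⌋ := by omega
          exact_mod_cast this
        have hiz : n * z ≤ i := by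
          have := Int.lt_floor_add_one ((n:ℝ) * z)
          have : (1:ℝ) ≤ k := by exact_mod_cast hk1
          linarith
        have hi0 : (0:ℝ) < i := by linarith
        have := hK1' i
        have hib : (0:ℝ) < (i:ℝ)^β := by positivity
        rw [abs_mul, abs_of_pos hib, ← le_div_iff₀ hib] at this
        refine this.trans ?_
        rw [div_eq_mul_inv, ← Real.rpow_neg hi0.le]
        refine mul_le_mul_of_nonneg_left ?_ hK10
        exact Real.rpow_le_rpow_of_nonpos hnz hiz (by linarith)
      refine (Finset.sum_le_sum this).trans ?_
      simp
    calc _ ≤ (n:ℝ)^(β-1) * (n * (K1 * (n * z)^(-β))) := mul_le_mul_of_nonneg_left hd hnp.le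
      _ = K1 * z^(-β) := by
        rw [Real.mul_rpow hn'.le hz.le]
        have : (n:ℝ)^(β-1) * n * (n:ℝ)^(-β) = 1 := by
          nth_rewrite 2 [← Real.rpow_one (n:ℝ)]
          rw [← Real.rpow_add hn', ← Real.rpow_add hn']; simp
        linear_combination K1 * z^(-β) * this
      _ ≤ _ := by
        refine mul_le_mul_of_nonneg_right (by linarith) (by positivity)

lemma tsum_eq_integral (f : ℤ → ℝ) (hf : Integrable (fun x : ℝ => f ⌊x⌋)) :
    ∑' j : ℤ, f j = ∫ x : ℝ, f ⌊x⌋ := by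
  have h := (hf.hasSum_intervalIntegral_comp_add_int).tsum_eq
  rw [← h]
  congr 1
  ext j
  have : ∫ x in (0:ℝ)..1, f ⌊x + j⌋ = ∫ x in (0:ℝ)..1, f j := by
    refine intervalIntegral.integral_congr_ae ?_
    have h1 : ∀ᵐ x : ℝ, x ≠ 1 := by simp [ae_iff]
    filter_upwards [h1] with x hx hm
    rw [Set.uIoc_of_le zero_le_one] at hm
    have : ⌊x⌋ = 0 := Int.floor_eq_iff.2 (by
      simp only [Int.cast_zero, zero_add]
      exact ⟨hm.1.le, lt_of_le_of_ne hm.2 hx⟩)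
    rw [Int.floor_add_intCast, this, zero_add]
  rw [this]; simp

noncomputable def bnd (β K z : ℝ) : ℝ :=
  (if z < -1 then 0 else if z ≤ 1 then K else K * z^(-β))^2

lemma bnd_integrable (β K : ℝ) (hβ1 : 1 / 2 < β) : Integrable (bnd β K) := by
  have h1 : IntegrableOn (bnd β K) (Set.Iio (-1)) := by
    refine IntegrableOn.congr_fun (f := fun _ => (0:ℝ)) integrableOn_zero ?_ measurableSet_Iio
    intro z hz
    simp only [Set.mem_Iio] at hz
    simp [bnd, hz]
  have h2 : IntegrableOn (bnd β K) (Set.Icc (-1) 1) := by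
    refine (integrableOn_const (C := K^2) (by simp)).congr_fun ?_ measurableSet_Icc
    intro z hz
    simp [bnd, not_lt.2 hz.1, hz.2]
  have h3 : IntegrableOn (bnd β K) (Set.Ioi 1) := by
    refine IntegrableOn.congr_fun (f := fun z : ℝ => K^2 * z^(-(2*β)))
      (Integrable.const_mul (integrableOn_Ioi_rpow_of_lt (by linarith) one_pos) (K^2)) ?_
      measurableSet_Ioi
    intro z hz
    simp only [Set.mem_Ioi] at hz
    have : ¬ z < -1 := by linarith
    simp only [bnd, this, not_le.2 hz, if_false]
    rw [mul_pow, ← Real.rpow_natCast (z^(-β)), ← Real.rpow_mul (by linarith)]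
    congr 2
    push_cast; ring
  have h := (h1.union h2).union h3
  have hu : Set.Iio (-1:ℝ) ∪ Set.Icc (-1) 1 ∪ Set.Ioi 1 = Set.univ := by
    ext z; simp only [Set.mem_union, Set.mem_Iio, Set.mem_Icc, Set.mem_Ioi, Set.mem_univ, iff_true]
    rcases lt_or_ge z (-1) with h | h
    · exact Or.inl (Or.inl h)
    · rcases le_or_gt z 1 with h' | h'
      · exact Or.inl (Or.inr ⟨h, h'⟩)
      · exact Or.inr h'
  rwa [hu, integrableOn_univ] at h

lemma Fn_measurable (β : ℝ) (a : ℕ → ℝ) (n : ℕ) : Measurable (Fn β a n) := by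
  have h : Measurable (fun j : ℤ => (n:ℝ)^(β-1) * dCoef a n (-j)) := measurable_from_top
  exact h.comp (Int.measurable_floor.comp (measurable_const.mul measurable_id))

lemma limit_eq (β : ℝ) (hβ2 : β < 1)
    (hint : Integrable (fun z => (Gf β (1+z) - Gf β z)^2)) :
    ∫ z, (Gf β (1+z) - Gf β z)^2 =
    (∫ z in Set.Ioi (0:ℝ), (∫ u in (0:ℝ)..1, (u + z) ^ (-β)) ^ 2) +
              ∫ z in (0:ℝ)..1, (∫ u in (0:ℝ)..(1 - z), u ^ (-β)) ^ 2 := by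
  have hb : 0 < 1 - β := by linarith
  have hG0 : ∀ x ≤ 0, Gf β x = 0 := fun x hx => by
    simp [Gf, max_eq_right hx, Real.zero_rpow hb.ne']
  have hG1 : ∀ x, 0 ≤ x → Gf β x = x^(1-β)/(1-β) := fun x hx => by
    simp [Gf, max_eq_left hx]
  rw [← intervalIntegral.integral_Iic_add_Ioi (b := 0) hint.integrableOn hint.integrableOn, add_comm]
  congr 1
  · refine setIntegral_congr_fun measurableSet_Ioi ?_
    intro z hz
    simp only [Set.mem_Ioi] at hz
    simp only
    rw [intervalIntegral.integral_comp_add_right (fun x => x^(-β)),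
      integral_rpow (Or.inl (by linarith)), hG1 _ (by linarith), hG1 _ hz.le,
      show -β + 1 = 1 - β by ring, zero_add]
    ring
  · have e1 : ∫ z in (0:ℝ)..1, (∫ u in (0:ℝ)..(1 - z), u ^ (-β)) ^ 2
        = ∫ z in (0:ℝ)..1, (fun w => (Gf β (1+w) - Gf β w)^2) (-z) := by
      refine intervalIntegral.integral_congr ?_
      intro z hz
      rw [Set.uIcc_of_le zero_le_one] at hz
      simp only
      rw [integral_rpow (Or.inl (by linarith)), hG0 (-z) (by linarith [hz.1]),
        hG1 _ (by linarith [hz.2]), show -β + 1 = 1 - β by ring, Real.zero_rpow hb.ne',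
        ← sub_eq_add_neg]
      ring
    rw [e1, intervalIntegral.integral_comp_neg (fun w => (Gf β (1+w) - Gf β w)^2), neg_zero,
      intervalIntegral.integral_of_le (by norm_num)]
    refine setIntegral_eq_of_subset_of_forall_sdiff_eq_zero measurableSet_Iic
      Set.Ioc_subset_Iic_self ?_
    intro z hz
    have h1 : z ≤ 0 := hz.1
    have h2 : z ≤ -1 := by
      by_contra h
      exact hz.2 ⟨not_le.1 h, h1⟩
    rw [hG0 _ (by linarith), hG0 _ h1]; simp

lemma const_pos (β : ℝ) (hβ2 : β < 1) :
    0 < (∫ z in Set.Ioi (0:ℝ), (∫ u in (0:ℝ)..1, (u + z) ^ (-β)) ^ 2) +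
              ∫ z in (0:ℝ)..1, (∫ u in (0:ℝ)..(1 - z), u ^ (-β)) ^ 2 := by
  have hb : 0 < 1 - β := by linarith
  refine add_pos_of_nonneg_of_pos (integral_nonneg fun z => sq_nonneg _) ?_
  have e : ∀ z : ℝ, (∫ u in (0:ℝ)..(1 - z), u ^ (-β)) = (1-z)^(1-β)/(1-β) := by
    intro z
    rw [integral_rpow (Or.inl (by linarith)), show -β + 1 = 1 - β by ring, Real.zero_rpow hb.ne',
      sub_zero]
  simp only [e]
  refine intervalIntegral.intervalIntegral_pos_of_pos_on ?_ ?_ one_pos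
  · refine Continuous.intervalIntegrable ?_ _ _
    refine Continuous.pow (Continuous.div_const ?_ _) 2
    exact (continuous_const.sub continuous_id).rpow_const fun x => Or.inr hb.le
  · intro z hz
    have : 0 < 1 - z := by linarith [hz.2]
    positivity

/-- If `a_j ~ j^(-β)` with `1/2 < β < 1`, then
`∑_{j ≤ n} d_{n,j}^2 ~ C n^(3-2β)` with
`C = ∫_0^∞ (∫_0^1 (u+z)^(-β) du)^2 dz + ∫_0^1 (∫_0^{1-z} u^(-β) du)^2 dz`. -/
theorem dCoef_sq_sum_asymp (β : ℝ) (hβ1 : 1 / 2 < β) (hβ2 : β < 1) (a : ℕ → ℝ)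
    (ha : Tendsto (fun j : ℕ => a j * (j : ℝ) ^ β) atTop (nhds 1)) :
    Tendsto
      (fun n : ℕ =>
        (∑' j : ℤ, (dCoef a n j) ^ 2) /
          (((∫ z in Set.Ioi (0:ℝ), (∫ u in (0:ℝ)..1, (u + z) ^ (-β)) ^ 2) +
              ∫ z in (0:ℝ)..1, (∫ u in (0:ℝ)..(1 - z), u ^ (-β)) ^ 2) *
            (n : ℝ) ^ (3 - 2 * β)))
      atTop (nhds 1) := by
  obtain ⟨K, hK0, hK⟩ := Fn_bound β hβ1 hβ2 a ha
  have hbd : ∀ n : ℕ, 0 < n → ∀ z, ‖(Fn β a n z)^2‖ ≤ bnd β K z := by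
    intro n hn z
    rw [Real.norm_eq_abs, abs_pow]
    exact pow_le_pow_left₀ (abs_nonneg _) (hK n hn z) 2
  have hmeas : ∀ n : ℕ, AEStronglyMeasurable (fun z => (Fn β a n z)^2) volume := fun n =>
    ((Fn_measurable β a n).pow_const 2).aestronglyMeasurable
  have hlim : ∀ᵐ z : ℝ, Tendsto (fun n : ℕ => (Fn β a n z)^2) atTop
      (nhds ((Gf β (1+z) - Gf β z)^2)) := by
    have h1 : ∀ᵐ x : ℝ, x ≠ 0 := by simp [ae_iff]
    have h2 : ∀ᵐ x : ℝ, x ≠ -1 := by simp [ae_iff]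
    filter_upwards [h1, h2] with z hz hz1
    simp only [Fn_eq]
    refine ((Tn_tendsto β hβ2 a ha (1+z) ?_).sub (Tn_tendsto β hβ2 a ha z hz)).pow 2
    intro h; exact hz1 (by linarith)
  have hbi := bnd_integrable β K hβ1
  have hconv := tendsto_integral_filter_of_dominated_convergence (bnd β K)
    (Eventually.of_forall hmeas)
    ((eventually_gt_atTop 0).mono fun n hn => Eventually.of_forall (hbd n hn)) hbi hlim
  have hint : Integrable (fun z => (Gf β (1+z) - Gf β z)^2) := by
    refine hbi.mono' (aestronglyMeasurable_of_tendsto_ae atTop hmeas hlim) ?_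
    filter_upwards [hlim] with z hz
    exact le_of_tendsto hz.norm ((eventually_gt_atTop 0).mono fun n hn => hbd n hn z)
  rw [limit_eq β hβ2 hint] at hconv
  have hC := const_pos β hβ2
  have hfin := hconv.div_const ((∫ z in Set.Ioi (0:ℝ), (∫ u in (0:ℝ)..1, (u + z) ^ (-β)) ^ 2) +
              ∫ z in (0:ℝ)..1, (∫ u in (0:ℝ)..(1 - z), u ^ (-β)) ^ 2)
  rw [div_self hC.ne'] at hfin
  refine hfin.congr' ?_
  filter_upwards [eventually_gt_atTop 0] with n hn
  have hn' : (0:ℝ) < n := by positivity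
  have hsq : ((n:ℝ)^(β-1))^2 = (n:ℝ)^(2*β-2) := by
    rw [← Real.rpow_natCast, ← Real.rpow_mul hn'.le]
    congr 1; push_cast; ring
  have hpp : (0:ℝ) < (n:ℝ)^(2*β-2) := by positivity
  have hFi : Integrable (fun z => (Fn β a n z)^2) :=
    hbi.mono' (hmeas n) (Eventually.of_forall (hbd n hn))
  have hFe : (fun z => (Fn β a n z)^2) =
      fun z => (n:ℝ)^(2*β-2) * (fun x : ℝ => (dCoef a n (-⌊x⌋))^2) (n * z) := by
    ext z; simp only [Fn, mul_pow, hsq]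
  rw [hFe, integrable_const_mul_iff (IsUnit.mk0 _ hpp.ne'),
    integrable_comp_mul_left_iff (fun x : ℝ => (dCoef a n (-⌊x⌋))^2) hn'.ne'] at hFi
  have hts := tsum_eq_integral (fun j => (dCoef a n (-j))^2) hFi
  have hneg : ∑' j : ℤ, (dCoef a n (-j))^2 = ∑' j : ℤ, (dCoef a n j)^2 :=
    (Equiv.neg ℤ).tsum_eq (fun j => (dCoef a n j)^2)
  rw [hneg] at hts
  rw [hFe, MeasureTheory.integral_const_mul, Measure.integral_comp_mul_left (fun x : ℝ => (dCoef a n (-⌊x⌋))^2), ← hts, smul_eq_mul,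
    abs_of_pos (inv_pos.2 hn')]
  have hr : (n:ℝ)^(2*β-2) * (n:ℝ)⁻¹ = ((n:ℝ)^(3-2*β))⁻¹ := by
    rw [← Real.rpow_neg_one, ← Real.rpow_add hn', ← Real.rpow_neg hn'.le]
    congr 1; ring
  rw [← mul_assoc, hr, div_mul_eq_div_div_swap, div_eq_mul_inv (∑' j : ℤ, _) ((n:ℝ)^(3-2*β)),
    mul_comm (∑' j : ℤ, _)]
end

section
/- Let ξ be a random variable with density f_{b_n} (tapered Pareto with parameters α∈(0,2) and b_n=n^γ), centered at its mean, and let d_{n,j} be coefficients with max_j |d_{n,j}| / (∑_j d_{n,j}^2)^{1/2} ≤ C n^{-1/2}. If γ < 1/α, then the Lyapunov ratio L(3,n) = (∑_j |d_{n,j}|^3 / (∑_j d_{n,j}^2)^{3/2}) · (E|ξ|^3 / (E ξ^2)^{3/2}) tends to 0 as n→∞. -/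
open MeasureTheory ProbabilityTheory Filter

/-- The tapered Pareto density. -/
noncomputable def taperedParetoDensity (α b x : ℝ) : ℝ :=
  if x < 1 then 0
  else if x ≤ b then α * x ^ (-α - 1)
  else b ^ (-α) * Real.exp (b - x)

lemma tpd_nonneg {α b : ℝ} (hα : 0 < α) (hb : 1 ≤ b) (x : ℝ) : 0 ≤ taperedParetoDensity α b x := by
  unfold taperedParetoDensity
  split_ifs with h1 h2
  · exact le_rfl
  · have : 0 < x := by linarith
    positivity
  · positivity

lemma tpd_meas (α b : ℝ) : Measurable (taperedParetoDensity α b) := by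
  unfold taperedParetoDensity
  refine Measurable.ite measurableSet_Iio measurable_const
    (Measurable.ite measurableSet_Iic ?_ ?_)
  · fun_prop
  · fun_prop

lemma tail_aux (b : ℝ) (hb : 1 ≤ b) :
    IntegrableOn (fun x : ℝ => x ^ 3 * Real.exp (b - x)) (Set.Ioi b) ∧
    ∫ x in Set.Ioi b, x ^ 3 * Real.exp (b - x) = b ^ 3 + 3 * b ^ 2 + 6 * b + 6 := by
  have hder : ∀ x ∈ Set.Ici b, HasDerivAt
      (fun x : ℝ => -((x ^ 3 + 3 * x ^ 2 + 6 * x + 6) * Real.exp (b - x)))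
      (x ^ 3 * Real.exp (b - x)) x := by
    intro x _
    have h1 : HasDerivAt (fun x : ℝ => Real.exp (b - x)) (Real.exp (b - x) * (-1)) x :=
      ((hasDerivAt_id x).const_sub b).exp
    have h2 : HasDerivAt (fun x : ℝ => x ^ 3 + 3 * x ^ 2 + 6 * x + 6)
        (3 * x ^ 2 + 3 * (2 * x) + 6) x := by
      have := ((((hasDerivAt_pow 3 x)).add ((hasDerivAt_pow 2 x).const_mul 3)).add
        ((hasDerivAt_id x).const_mul 6)).add_const 6
      exact this.congr_deriv (by norm_num)
    exact (h2.mul h1).neg.congr_deriv (by ring)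
  have hpos : ∀ x ∈ Set.Ioi b, 0 ≤ x ^ 3 * Real.exp (b - x) := by
    intro x hx
    have : 0 < x := by have := Set.mem_Ioi.1 hx; linarith
    positivity
  have hlim : Tendsto (fun x : ℝ => -((x ^ 3 + 3 * x ^ 2 + 6 * x + 6) * Real.exp (b - x)))
      atTop (nhds 0) := by
    have p := fun n => Real.tendsto_pow_mul_exp_neg_atTop_nhds_zero n
    have := (((((p 3).add ((p 2).const_mul 3)).add ((p 1).const_mul 6)).add
      ((p 0).const_mul 6)).const_mul (-Real.exp b))
    simp only [mul_zero, add_zero] at this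
    refine this.congr fun x => ?_
    rw [sub_eq_add_neg, Real.exp_add]
    ring
  refine ⟨integrableOn_Ioi_deriv_of_nonneg' hder hpos hlim, ?_⟩
  rw [integral_Ioi_of_hasDerivAt_of_nonneg' hder hpos hlim]
  simp

lemma cube_aux {α b : ℝ} (hα : 0 < α) (hα2 : α < 2) (hb : 1 ≤ b) :
    Integrable (fun x => taperedParetoDensity α b x * x ^ 3) ∧
    ∫ x, taperedParetoDensity α b x * x ^ 3 ≤ (α + 16) * b ^ (3 - α) := by
  have hb0 : 0 < b := by linarith
  obtain ⟨ti, tv⟩ := tail_aux b hb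
  set G1 : ℝ → ℝ := (Set.Icc 1 b).indicator (fun _ => α * b ^ (2 - α)) with hG1
  set G2 : ℝ → ℝ := (Set.Ioi b).indicator (fun x => b ^ (-α) * (x ^ 3 * Real.exp (b - x))) with hG2
  have i1 : Integrable G1 := by
    rw [hG1, integrable_indicator_iff measurableSet_Icc]
    exact integrableOn_const (by simp)
  have i2 : Integrable G2 := by
    rw [hG2, integrable_indicator_iff measurableSet_Ioi]
    exact ti.const_mul _
  have hnn : ∀ x, 0 ≤ taperedParetoDensity α b x * x ^ 3 := by
    intro x
    by_cases hx : x < 1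
    · simp [taperedParetoDensity, hx]
    · have := tpd_nonneg hα hb x
      have : 0 ≤ x := by linarith
      positivity
  have hle : ∀ x, taperedParetoDensity α b x * x ^ 3 ≤ G1 x + G2 x := by
    intro x
    unfold taperedParetoDensity
    split_ifs with h1 h2
    · simp only [zero_mul]
      refine add_nonneg (Set.indicator_nonneg (fun _ _ => by positivity) _)
        (Set.indicator_nonneg (fun y hy => ?_) _)
      have : 0 < y := by have := Set.mem_Ioi.1 hy; linarith
      positivity
    · have hx0 : 0 < x := by linarith
      have e1 : G1 x = α * b ^ (2 - α) := Set.indicator_of_mem (Set.mem_Icc.2 ⟨by linarith, h2⟩) _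
      have e2 : G2 x = 0 := Set.indicator_of_notMem (by simp [h2]) _
      rw [e1, e2, add_zero, mul_assoc, ← Real.rpow_natCast x 3, ← Real.rpow_add hx0]
      gcongr
      have : -α - 1 + ((3 : ℕ) : ℝ) = 2 - α := by push_cast; ring
      rw [this]
      exact Real.rpow_le_rpow hx0.le h2 (by linarith)
    · have e1 : G1 x = 0 := Set.indicator_of_notMem (by simp; intro; linarith) _
      have e2 : G2 x = b ^ (-α) * (x ^ 3 * Real.exp (b - x)) :=
        Set.indicator_of_mem (by simp; linarith) _
      rw [e1, e2]
      apply le_of_eq; ring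
  have hi : Integrable (fun x => taperedParetoDensity α b x * x ^ 3) := by
    refine (i1.add i2).mono' ((tpd_meas α b).mul (measurable_id.pow_const 3)).aestronglyMeasurable ?_
    refine Eventually.of_forall fun x => ?_
    rw [Real.norm_of_nonneg (hnn x)]
    exact hle x
  refine ⟨hi, ?_⟩
  calc _ ≤ ∫ x, (G1 x + G2 x) := integral_mono hi (i1.add i2) hle
    _ = (b - 1) * (α * b ^ (2 - α)) + b ^ (-α) * (b ^ 3 + 3 * b ^ 2 + 6 * b + 6) := by
        rw [integral_add i1 i2, hG1, hG2, integral_indicator measurableSet_Icc,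
          integral_indicator measurableSet_Ioi,
          integral_const_mul (b ^ (-α)) (fun x : ℝ => x ^ 3 * Real.exp (b - x)), tv]
        simp [hb]
    _ ≤ b * (α * b ^ (2 - α)) + b ^ (-α) * (16 * b ^ 3) := by
        gcongr
        · linarith
        · nlinarith [pow_le_pow_right₀ hb (show 2 ≤ 3 by norm_num), pow_le_pow_right₀ hb (show 1 ≤ 3 by norm_num), pow_le_pow_right₀ hb (show 0 ≤ 3 by norm_num)]
    _ = (α + 16) * b ^ (3 - α) := by
        have e1 : b ^ (3 - α) = b * b ^ (2 - α) := by
          rw [show 3 - α = 1 + (2 - α) by ring, Real.rpow_add hb0, Real.rpow_one]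
        have e2 : b ^ (3 - α) = b ^ (-α) * b ^ 3 := by
          rw [show 3 - α = (-α) + (3 : ℕ) by push_cast; ring, Real.rpow_add hb0, Real.rpow_natCast]
        rw [add_mul]
        nth_rewrite 1 [e1]
        rw [e2]; ring

lemma dom_aux {α b : ℝ} (hα : 0 < α) (hα2 : α < 2) (hb : 1 ≤ b) (g : ℝ → ℝ)
    (hg : Measurable g) (K : ℝ) (h : ∀ x, 1 ≤ x → |g x| ≤ K * x ^ 3) :
    Integrable (fun x => taperedParetoDensity α b x * g x) := by
  refine ((cube_aux hα hα2 hb).1.const_mul K).mono'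
    ((tpd_meas α b).mul hg).aestronglyMeasurable ?_
  refine Eventually.of_forall fun x => ?_
  rw [norm_mul, Real.norm_of_nonneg (tpd_nonneg hα hb x), Real.norm_eq_abs]
  by_cases hx : x < 1
  · simp [taperedParetoDensity, hx]
  · have := mul_le_mul_of_nonneg_left (h x (not_lt.1 hx)) (tpd_nonneg hα hb x)
    linarith

lemma var_aux {α b : ℝ} (hα : 0 < α) (hα2 : α < 2) (hb : 2 ≤ b) (m : ℝ) :
    α / 96 * b ^ (2 - α) ≤ ∫ x, taperedParetoDensity α b x * (x - m) ^ 2 := by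
  have hb0 : 0 < b := by linarith
  have hb1 : 1 ≤ b := by linarith
  set G : ℝ → ℝ := (Set.Ioc (b / 2) b).indicator (fun x => α * b ^ (-α - 1) * (x - m) ^ 2) with hG
  have iG : Integrable G := by
    rw [hG, integrable_indicator_iff measurableSet_Ioc]
    exact (Continuous.integrableOn_Icc (by fun_prop)).mono_set Set.Ioc_subset_Icc_self
  have i2 : Integrable (fun x => taperedParetoDensity α b x * (x - m) ^ 2) := by
    refine dom_aux hα hα2 hb1 _ (by fun_prop) ((1 + |m|) ^ 2) fun x hx => ?_
    rw [abs_of_nonneg (by positivity)]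
    have h1 : |x - m| ≤ (1 + |m|) * x := by
      have := abs_sub x m
      rw [abs_of_nonneg (by linarith : (0:ℝ) ≤ x)] at this
      nlinarith [abs_nonneg m]
    calc (x - m) ^ 2 = |x - m| ^ 2 := (sq_abs _).symm
      _ ≤ ((1 + |m|) * x) ^ 2 := by gcongr
      _ = (1 + |m|) ^ 2 * x ^ 2 := by ring
      _ ≤ _ := by gcongr; norm_num
  have hle : ∀ x, G x ≤ taperedParetoDensity α b x * (x - m) ^ 2 := by
    intro x
    by_cases hx : x ∈ Set.Ioc (b / 2) b
    · rw [hG, Set.indicator_of_mem hx]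
      obtain ⟨ha, hc⟩ := hx
      have hx0 : 0 < x := by linarith
      have : taperedParetoDensity α b x = α * x ^ (-α - 1) := by
        unfold taperedParetoDensity
        rw [if_neg (by linarith), if_pos hc]
      rw [this]
      gcongr ?_ * _
      gcongr ?_ * ?_
      exact Real.rpow_le_rpow_of_nonpos hx0 hc (by linarith)
    · rw [hG, Set.indicator_of_notMem hx]
      exact mul_nonneg (tpd_nonneg hα hb1 x) (sq_nonneg _)
  refine le_trans ?_ (integral_mono iG i2 hle)
  rw [hG, integral_indicator measurableSet_Ioc, integral_const_mul,
    ← intervalIntegral.integral_of_le (by linarith : b / 2 ≤ b)]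
  have e : ∫ x in (b/2)..b, (x - m) ^ 2 = ((b - m) ^ 3 - (b / 2 - m) ^ 3) / 3 := by
    rw [intervalIntegral.integral_comp_sub_right (fun x => x ^ 2) m, integral_pow]
    norm_num
  rw [e]
  have e2 : b ^ (2 - α) = b ^ (-α - 1) * b ^ 3 := by
    rw [show 2 - α = (-α - 1) + (3 : ℕ) by push_cast; ring, Real.rpow_add hb0, Real.rpow_natCast]
  rw [e2]
  have h3 : b ^ 3 / 96 ≤ ((b - m) ^ 3 - (b / 2 - m) ^ 3) / 3 := by
    nlinarith [mul_nonneg hb0.le (sq_nonneg (3 * b / 4 - m))]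
  calc α / 96 * (b ^ (-α - 1) * b ^ 3) = α * b ^ (-α - 1) * (b ^ 3 / 96) := by ring
    _ ≤ _ := by gcongr

lemma ratio_aux {α b : ℝ} (hα : 0 < α) (hα2 : α < 2) (hb : 2 ≤ b) {Ω : Type*} [MeasureSpace Ω]
    [IsProbabilityMeasure (ℙ : Measure Ω)] (Z : Ω → ℝ) (hm : Measurable Z)
    (hlaw : Measure.map Z ℙ =
        volume.withDensity fun x => ENNReal.ofReal (taperedParetoDensity α b x)) :
    (∫ ω, |Z ω - ∫ ω', Z ω'| ^ 3) / (∫ ω, (Z ω - ∫ ω', Z ω') ^ 2) ^ ((3 : ℝ) / 2)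
      ≤ (2 * (α + 16) / (α / 96) ^ ((3 : ℝ) / 2)) * b ^ (α / 2) := by
  have hb0 : 0 < b := by linarith
  have hb1 : 1 ≤ b := by linarith
  have hfm : Measurable fun x => ENNReal.ofReal (taperedParetoDensity α b x) :=
    (tpd_meas α b).ennreal_ofReal
  have tr : ∀ g : ℝ → ℝ, Measurable g →
      ∫ ω, g (Z ω) = ∫ x, taperedParetoDensity α b x * g x := by
    intro g hg
    rw [← integral_map (f := g) hm.aemeasurable hg.aestronglyMeasurable, hlaw,
      integral_withDensity_eq_integral_toReal_smul hfm (by simp)]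
    refine integral_congr_ae (Eventually.of_forall fun x => ?_)
    simp [ENNReal.toReal_ofReal (tpd_nonneg hα hb1 x)]
  have tri : ∀ g : ℝ → ℝ, Measurable g → ∀ K, (∀ x, 1 ≤ x → |g x| ≤ K * x ^ 3) →
      Integrable (fun ω => g (Z ω)) := by
    intro g hg K hK
    have : Integrable g (Measure.map Z ℙ) := by
      rw [hlaw, integrable_withDensity_iff_integrable_smul' hfm (by simp)]
      refine (dom_aux hα hα2 hb1 g hg K hK).congr (Eventually.of_forall fun x => ?_)
      simp [ENNReal.toReal_ofReal (tpd_nonneg hα hb1 x)]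
    exact this.comp_measurable hm
  have hge : ∀ᵐ ω, 1 ≤ Z ω := by
    have h1 : ∀ᵐ x ∂(Measure.map Z ℙ), 1 ≤ x := by
      rw [hlaw, ae_withDensity_iff hfm]
      refine Eventually.of_forall fun x hx => ?_
      by_contra h
      exact hx (by simp [taperedParetoDensity, not_le.1 h])
    exact ae_of_ae_map hm.aemeasurable h1
  set m := ∫ ω', Z ω' with hmdef
  have hm0 : 0 ≤ m := integral_nonneg_of_ae (hge.mono fun ω h => by simp; linarith)
  have iZ : Integrable Z := tri (fun x => x) measurable_id 1 fun x hx => by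
    rw [abs_of_nonneg (by linarith)]
    nlinarith [pow_le_pow_right₀ hx (show 1 ≤ 3 by norm_num)]
  have iZ3 : Integrable (fun ω => Z ω ^ 3) := tri (fun x => x ^ 3) (by fun_prop) 1 fun x hx => by
    rw [abs_of_nonneg (by positivity)]; simp
  have hM3 : ∫ ω, Z ω ^ 3 ≤ (α + 16) * b ^ (3 - α) := by
    rw [tr (fun x => x ^ 3) (by fun_prop)]
    exact (cube_aux hα hα2 hb1).2
  have hjen : m ^ 3 ≤ ∫ ω, Z ω ^ 3 := by
    have h1 : Integrable (fun ω => 3 * m ^ 2 * Z ω - 2 * m ^ 3) :=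
      (iZ.const_mul _).sub (integrable_const _)
    have h2 : ∫ ω, (3 * m ^ 2 * Z ω - 2 * m ^ 3) = m ^ 3 := by
      rw [integral_sub (iZ.const_mul _) (integrable_const _), integral_const_mul, ← hmdef]
      simp; ring
    rw [← h2]
    refine integral_mono_ae h1 iZ3 (hge.mono fun ω h => ?_)
    simp only
    nlinarith [mul_nonneg (by linarith : 0 ≤ Z ω + 2 * m) (sq_nonneg (Z ω - m))]
  have hnum : ∫ ω, |Z ω - m| ^ 3 ≤ 2 * (α + 16) * b ^ (3 - α) := by
    calc _ ≤ ∫ ω, (Z ω ^ 3 + m ^ 3) := by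
          refine integral_mono_of_nonneg (Eventually.of_forall fun ω => by positivity)
            (iZ3.add (integrable_const _)) (hge.mono fun ω h => ?_)
          simp only
          have hz : 0 ≤ Z ω := by linarith
          rcases le_total (Z ω) m with h' | h'
          · have : |Z ω - m| ≤ m := by rw [abs_le]; constructor <;> linarith
            have := pow_le_pow_left₀ (abs_nonneg _) this 3
            have : 0 ≤ Z ω ^ 3 := by positivity
            linarith
          · have : |Z ω - m| ≤ Z ω := by rw [abs_le]; constructor <;> linarith
            have := pow_le_pow_left₀ (abs_nonneg _) this 3
            have : 0 ≤ m ^ 3 := by positivity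
            linarith
      _ = (∫ ω, Z ω ^ 3) + m ^ 3 := by
          rw [integral_add iZ3 (integrable_const _)]; simp
      _ ≤ _ := by linarith
  have hden : α / 96 * b ^ (2 - α) ≤ ∫ ω, (Z ω - m) ^ 2 := by
    rw [tr (fun x => (x - m) ^ 2) (by fun_prop)]
    exact var_aux hα hα2 hb m
  have hp : 0 < α / 96 * b ^ (2 - α) := by positivity
  calc _ ≤ (2 * (α + 16) * b ^ (3 - α)) / (α / 96 * b ^ (2 - α)) ^ ((3 : ℝ) / 2) := by
        gcongr
    _ = _ := by
        rw [Real.mul_rpow (by positivity) (by positivity), ← Real.rpow_mul hb0.le]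
        have : b ^ (3 - α) = b ^ (α / 2) * b ^ ((2 - α) * (3 / 2)) := by
          rw [← Real.rpow_add hb0]; congr 1; ring
        rw [this]
        have : 0 < b ^ ((2 - α) * (3 / 2)) := by positivity
        field_simp

lemma coef_aux (d : ℤ → ℝ) (hs : Summable fun j => d j ^ 2) (c : ℝ) (hc : 0 ≤ c)
    (hd : ∀ j, |d j| ≤ c * (∑' j, d j ^ 2) ^ ((1 : ℝ) / 2)) :
    (∑' j, |d j| ^ 3) / (∑' j, d j ^ 2) ^ ((3 : ℝ) / 2) ≤ c := by
  set S := ∑' j, d j ^ 2 with hS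
  have hS0 : 0 ≤ S := tsum_nonneg fun j => sq_nonneg _
  have hp : ∀ j, |d j| ^ 3 ≤ c * S ^ ((1 : ℝ) / 2) * d j ^ 2 := fun j => by
    rw [pow_succ', sq_abs]
    exact mul_le_mul_of_nonneg_right (hd j) (sq_nonneg _)
  have h1 : ∑' j, |d j| ^ 3 ≤ c * S ^ ((1 : ℝ) / 2) * S := by
    rw [hS, ← tsum_mul_left]
    exact Summable.tsum_le_tsum hp
      (Summable.of_nonneg_of_le (fun j => by positivity) hp (hs.mul_left _)) (hs.mul_left _)
  refine div_le_of_le_mul₀ (by positivity) hc (h1.trans (le_of_eq ?_))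
  rw [mul_assoc]
  congr 1
  rcases hS0.eq_or_lt with h | h
  · rw [← h, Real.zero_rpow (by norm_num), Real.zero_rpow (by norm_num)]; simp
  · rw [← Real.rpow_add_one h.ne']; norm_num

/-- If `ζ_n` has the tapered Pareto density with `b_n = n^γ`, `0 < α < 2`, `γ < 1/α`,
`ξ_n = ζ_n − E ζ_n` is its centering, and coefficients `d_{n,j}` satisfy
`max_j |d_{n,j}| ≤ C n^{-1/2} (∑_j d_{n,j}^2)^{1/2}`, then the Lyapunov ratio
`L(3,n) = (∑_j |d_{n,j}|^3/(∑_j d_{n,j}^2)^{3/2}) · (E|ξ_n|^3/(E ξ_n^2)^{3/2})`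
tends to `0` as `n → ∞`. -/
theorem lyapunov_ratio_tendsto_zero
    (α γ : ℝ) (hα0 : 0 < α) (hα2 : α < 2) (hγ0 : 0 < γ) (hγ : γ < 1 / α)
    {Ω : Type*} [MeasureSpace Ω] [IsProbabilityMeasure (ℙ : Measure Ω)]
    (ζ : ℕ → Ω → ℝ) (hmeas : ∀ n, Measurable (ζ n))
    (hlaw : ∀ n : ℕ, 1 ≤ n →
      Measure.map (ζ n) ℙ =
        volume.withDensity fun x => ENNReal.ofReal (taperedParetoDensity α ((n : ℝ) ^ γ) x))
    (d : ℕ → ℤ → ℝ) (hdsum : ∀ n, Summable fun j : ℤ => (d n j) ^ 2)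
    (C : ℝ) (hC : 0 < C)
    (hd : ∀ n : ℕ, 1 ≤ n → ∀ j : ℤ,
      |d n j| ≤ C * (n : ℝ) ^ (-(1 : ℝ) / 2) * (∑' j : ℤ, (d n j) ^ 2) ^ ((1 : ℝ) / 2)) :
    Tendsto
      (fun n : ℕ =>
        ((∑' j : ℤ, |d n j| ^ 3) / (∑' j : ℤ, (d n j) ^ 2) ^ ((3 : ℝ) / 2)) *
          ((∫ ω, |ζ n ω - ∫ ω', ζ n ω'| ^ 3) /
            (∫ ω, (ζ n ω - ∫ ω', ζ n ω') ^ 2) ^ ((3 : ℝ) / 2)))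
      atTop (nhds 0) := by
  set K := 2 * (α + 16) / (α / 96) ^ ((3 : ℝ) / 2) with hK
  have hαγ : γ * α < 1 := by rwa [lt_div_iff₀ hα0] at hγ
  have hlim : Tendsto (fun n : ℕ => C * K * (n : ℝ) ^ (-((1 - γ * α) / 2))) atTop (nhds 0) := by
    have := ((tendsto_rpow_neg_atTop (y := (1 - γ * α) / 2) (by linarith)).comp
      tendsto_natCast_atTop_atTop).const_mul (C * K)
    simpa using this
  have hb : ∀ᶠ n : ℕ in atTop, 2 ≤ (n : ℝ) ^ γ :=
    ((tendsto_rpow_atTop hγ0).comp tendsto_natCast_atTop_atTop).eventually_ge_atTop 2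
  refine squeeze_zero' (Eventually.of_forall fun n => ?_) ?_ hlim
  · have h1 : 0 ≤ ∑' j : ℤ, (d n j) ^ 2 := tsum_nonneg fun j => sq_nonneg _
    have h2 : 0 ≤ ∑' j : ℤ, |d n j| ^ 3 := tsum_nonneg fun j => by positivity
    have h3 : 0 ≤ ∫ ω, |ζ n ω - ∫ ω', ζ n ω'| ^ 3 := integral_nonneg fun ω => by positivity
    have h4 : 0 ≤ ∫ ω, (ζ n ω - ∫ ω', ζ n ω') ^ 2 := integral_nonneg fun ω => by positivity
    positivity
  · filter_upwards [hb, eventually_ge_atTop 1] with n hn hn1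
    have hn0 : (0 : ℝ) < n := by exact_mod_cast hn1
    have A := coef_aux (d n) (hdsum n) (C * (n : ℝ) ^ (-(1 : ℝ) / 2)) (by positivity) (hd n hn1)
    have B := ratio_aux hα0 hα2 hn (ζ n) (hmeas n) (hlaw n hn1)
    have h3 : 0 ≤ ∫ ω, |ζ n ω - ∫ ω', ζ n ω'| ^ 3 := integral_nonneg fun ω => by positivity
    have h4 : 0 ≤ ∫ ω, (ζ n ω - ∫ ω', ζ n ω') ^ 2 := integral_nonneg fun ω => by positivity
    refine (mul_le_mul A B (by positivity) (by positivity)).trans (le_of_eq ?_)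
    rw [← Real.rpow_mul hn0.le, ← hK,
      show -((1 - γ * α) / 2) = -(1 : ℝ) / 2 + γ * (α / 2) by ring, Real.rpow_add hn0]
    ring
end
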